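/- For every function f : (0,∞) → (0,∞) with f(R) → ∞ as R → ∞, there exists a Morse gauge N (depending only on f) with the following property. Let Z be a metric space and let γ : I → Z be a geodesic (an isometric embedding of a real interval I). Suppose that for every R > 0, every continuous path β : [c,d] → Z whose endpoints β(c), β(d) lie at distance at most R from the image of γ and whose interior points β(t), for t ∈ (c,d), lie at distance at least R from the image of γ, satisfies ℓ(β) ≥ f(R)·d(β(c), β(d)) − f(R). Then γ is N-Morse. -/

import Mathlib

open Set Metric Filter Topology ENNReal

/-- The length (total variation) of a path `α` over the interval `[a, b]`. -/
noncomputable def pathLength {Z : Type*} [MetricSpace Z] (α : ℝ → Z) (a b : ℝ) : ℝ≥0∞ :=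
  eVariationOn α (Set.Icc a b)

/-- `α` is a `(K, C)`-quasi-geodesic path on `[a, b]`: it is continuous and for all
`a ≤ t ≤ u ≤ b`, the length of `α` over `[t, u]` is at most `K (u - t) + C` and
`d(α(t), α(u)) ≥ (u - t)/K - C`. -/
def IsQuasiGeodesicOn {Z : Type*} [MetricSpace Z] (K C : ℝ) (α : ℝ → Z) (a b : ℝ) : Prop :=
  ContinuousOn α (Set.Icc a b) ∧
  ∀ t u : ℝ, a ≤ t → t ≤ u → u ≤ b →
    pathLength α t u ≤ ENNReal.ofReal (K * (u - t) + C) ∧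
    (u - t) / K - C ≤ dist (α t) (α u)

/-- `γ` is a geodesic on the interval `I`: `I` is a real interval (order-connected set) and
`γ` is an isometric embedding of `I`. -/
def IsGeodesicOn {Z : Type*} [MetricSpace Z] (γ : ℝ → Z) (I : Set ℝ) : Prop :=
  I.OrdConnected ∧ ∀ t ∈ I, ∀ u ∈ I, dist (γ t) (γ u) = |t - u|

/-- The geodesic `γ : I → Z` is `N`-Morse: every `(K, C)`-quasi-geodesic path with endpoints
on the image of `γ` stays in the closed `N K C`-neighborhood of the image of `γ`. -/
def IsMorseGeodesic {Z : Type*} [MetricSpace Z] (N : ℝ → ℝ → ℝ) (γ : ℝ → Z) (I : Set ℝ) :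
    Prop :=
  ∀ K C : ℝ, 1 ≤ K → 0 ≤ C →
    ∀ (a b : ℝ) (α : ℝ → Z), a ≤ b → IsQuasiGeodesicOn K C α a b →
      α a ∈ γ '' I → α b ∈ γ '' I →
      ∀ t ∈ Set.Icc a b, Metric.infDist (α t) (γ '' I) ≤ N K C

/-- Every path whose endpoints are at distance at most `R` from the image of `γ` and whose
interior points are at distance at least `R` from the image of `γ` has length at least
`f(R) · d(endpoints) − f(R)`. -/
def DetourCondition {Z : Type*} [MetricSpace Z] (f : ℝ → ℝ) (γ : ℝ → Z) (I : Set ℝ) : Prop :=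
  ∀ R : ℝ, 0 < R →
    ∀ (c d : ℝ) (β : ℝ → Z), c ≤ d → ContinuousOn β (Set.Icc c d) →
      Metric.infDist (β c) (γ '' I) ≤ R → Metric.infDist (β d) (γ '' I) ≤ R →
      (∀ t ∈ Set.Ioo c d, R ≤ Metric.infDist (β t) (γ '' I)) →
      ENNReal.ofReal (f R * dist (β c) (β d) - f R) ≤ pathLength β c d

/-! Let a quasi-geodesic start and end on `A`, the image of `γ`, and consider a point of it outside
the `R`-neighbourhood of `A`. The excursion around that point is a detour, so its length is at least
`f R * D - f R`, where `D` is the distance between its endpoints. Being quasi-geodesic, its length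
is also at most `K ^ 2 * D` up to a constant. If `f R ≥ 2 * K ^ 2`, the comparison of these
estimates bounds `D`, hence the length of the excursion, in terms of `K` and `C` alone, and the
point lies within `R` plus that length of `A`. -/

/-- The subset `A` is `N`-Morse: every `(K, C)`-quasi-geodesic path with endpoints in `A` stays in
the closed `N K C`-neighbourhood of `A`. This extends `IsMorseGeodesic` to arbitrary subsets. -/
def IsMorseSet {Z : Type*} [MetricSpace Z] (N : ℝ → ℝ → ℝ) (A : Set Z) : Prop :=
  ∀ K C : ℝ, 1 ≤ K → 0 ≤ C →
    ∀ (a b : ℝ) (α : ℝ → Z), a ≤ b → IsQuasiGeodesicOn K C α a b →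
      α a ∈ A → α b ∈ A → ∀ t ∈ Icc a b, infDist (α t) A ≤ N K C

/-- Detours around the `R`-neighbourhood of `A` cost a factor `F`: a path with endpoints at distance
at most `R` and interior points at distance at least `R` from `A` has length at least
`F * d(endpoints) - F`. This is the condition at a single radius in `DetourCondition`, for an
arbitrary subset. -/
def HasDetourBound {Z : Type*} [MetricSpace Z] (A : Set Z) (R F : ℝ) : Prop :=
  ∀ (c d : ℝ) (β : ℝ → Z), c ≤ d → ContinuousOn β (Icc c d) →
    infDist (β c) A ≤ R → infDist (β d) A ≤ R → (∀ t ∈ Ioo c d, R ≤ infDist (β t) A) →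
    ENNReal.ofReal (F * dist (β c) (β d) - F) ≤ pathLength β c d

section Excursion

variable {X : Type*} [LinearOrder X] [TopologicalSpace X] [OrderClosedTopology X]

theorem exists_mem_Icc_disjoint_Ioo_of_isCompact {S : Set X} {a b t : X} (hS : IsCompact S)
    (ha : a ∈ S) (hb : b ∈ S) (ht : t ∈ Icc a b) :
    ∃ c ∈ S, ∃ d ∈ S, t ∈ Icc c d ∧ Disjoint (Ioo c d) S := by
  obtain ⟨c, ⟨hcS, hct⟩, hc_max⟩ :=
    (hS.inter_right isClosed_Iic).exists_isGreatest ⟨a, ha, ht.1⟩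
  obtain ⟨d, ⟨hdS, htd⟩, hd_min⟩ :=
    (hS.inter_right isClosed_Ici).exists_isLeast ⟨b, hb, ht.2⟩
  refine ⟨c, hcS, d, hdS, ⟨hct, htd⟩, disjoint_left.2 fun s hs hsS => ?_⟩
  rcases le_total s t with hst | hts
  · exact hs.1.not_ge (hc_max ⟨hsS, hst⟩)
  · exact hs.2.not_ge (hd_min ⟨hsS, hts⟩)

theorem exists_Icc_forall_Ioo_lt_of_continuousOn [CompactIccSpace X] {Y : Type*} [LinearOrder Y]
    [TopologicalSpace Y] [ClosedIicTopology Y] {h : X → Y} {a b t : X} {R : Y}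
    (hh : ContinuousOn h (Icc a b)) (ha : h a ≤ R) (hb : h b ≤ R) (ht : t ∈ Icc a b) :
    ∃ c d, a ≤ c ∧ d ≤ b ∧ t ∈ Icc c d ∧ h c ≤ R ∧ h d ≤ R ∧ ∀ s ∈ Ioo c d, R < h s := by
  have hab : a ≤ b := ht.1.trans ht.2
  have sublevel_compact : IsCompact (Icc a b ∩ h ⁻¹' Iic R) :=
    isCompact_Icc.of_isClosed_subset
      (hh.preimage_isClosed_of_isClosed isClosed_Icc isClosed_Iic) inter_subset_left
  obtain ⟨c, ⟨hc_mem, hc⟩, d, ⟨hd_mem, hd⟩, htcd, hdisj⟩ :=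
    exists_mem_Icc_disjoint_Ioo_of_isCompact sublevel_compact
      ⟨left_mem_Icc.2 hab, ha⟩ ⟨right_mem_Icc.2 hab, hb⟩ ht
  refine ⟨c, d, hc_mem.1, hd_mem.2, htcd, hc, hd, fun s hs => lt_of_not_ge fun hsR => ?_⟩
  exact disjoint_left.1 hdisj hs ⟨⟨hc_mem.1.trans hs.1.le, hs.2.le.trans hd_mem.2⟩, hsR⟩

end Excursion

theorem mul_add_le_of_mul_sub_le_of_div_sub_le {K C T D F : ℝ} (hK : 0 < K) (hC : 0 ≤ C)
    (hF : 2 * K ^ 2 ≤ F) (hlower : T / K - C ≤ D) (hdetour : F * D - F ≤ K * T + C) :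
    K * T + C ≤ 2 * (K ^ 2 * (1 + C) + C) := by
  have hKT : K * T ≤ K ^ 2 * (D + C) := by
    have hT : T ≤ K * (D + C) := (div_le_iff₀' hK).1 (by linarith)
    calc K * T ≤ K * (K * (D + C)) := by gcongr
      _ = K ^ 2 * (D + C) := by ring
  have hKD : K ^ 2 * D ≤ K ^ 2 * (2 + C) + C := by
    rcases le_total D 1 with hD | hD
    · calc K ^ 2 * D ≤ K ^ 2 * (2 + C) := by gcongr; linarith
        _ ≤ K ^ 2 * (2 + C) + C := le_add_of_nonneg_right hC
    · have hmul : 2 * K ^ 2 * (D - 1) ≤ F * (D - 1) :=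
        mul_le_mul_of_nonneg_right hF (sub_nonneg.2 hD)
      linarith
  linarith

namespace IsQuasiGeodesicOn

variable {Z : Type*} [MetricSpace Z] {α : ℝ → Z} {A : Set Z} {K C R F a b : ℝ}

theorem mono {c d : ℝ} (hα : IsQuasiGeodesicOn K C α a b) (hac : a ≤ c) (hdb : d ≤ b) :
    IsQuasiGeodesicOn K C α c d :=
  ⟨hα.1.mono (Icc_subset_Icc hac hdb),
    fun t u hct htu hud => hα.2 t u (hac.trans hct) htu (hud.trans hdb)⟩

theorem pathLength_le_of_hasDetourBound (hα : IsQuasiGeodesicOn K C α a b)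
    (hA : HasDetourBound A R F) (hK : 0 < K) (hC : 0 ≤ C) (hF : 2 * K ^ 2 ≤ F) (hab : a ≤ b)
    (ha : infDist (α a) A ≤ R) (hb : infDist (α b) A ≤ R)
    (hout : ∀ t ∈ Ioo a b, R ≤ infDist (α t) A) :
    pathLength α a b ≤ ENNReal.ofReal (2 * (K ^ 2 * (1 + C) + C)) := by
  obtain ⟨hlength, hlower⟩ := hα.2 a b le_rfl hab le_rfl
  have hdetour : F * dist (α a) (α b) - F ≤ K * (b - a) + C := by
    have hnonneg : 0 ≤ K * (b - a) + C :=
      add_nonneg (mul_nonneg hK.le (sub_nonneg.2 hab)) hC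
    exact (ENNReal.ofReal_le_ofReal_iff hnonneg).1 ((hA a b α hab hα.1 ha hb hout).trans hlength)
  exact hlength.trans
    (ENNReal.ofReal_le_ofReal (mul_add_le_of_mul_sub_le_of_div_sub_le hK hC hF hlower hdetour))

theorem infDist_le_of_hasDetourBound {t : ℝ} (hα : IsQuasiGeodesicOn K C α a b)
    (hA : HasDetourBound A R F) (hK : 0 < K) (hC : 0 ≤ C) (hF : 2 * K ^ 2 ≤ F)
    (ha : infDist (α a) A ≤ R) (hb : infDist (α b) A ≤ R) (ht : t ∈ Icc a b) :
    infDist (α t) A ≤ R + 2 * (K ^ 2 * (1 + C) + C) := by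
  have hcont : ContinuousOn (fun s => infDist (α s) A) (Icc a b) :=
    (continuous_infDist_pt A).comp_continuousOn hα.1
  obtain ⟨c, d, hac, hdb, htcd, hc, hd, hout⟩ :=
    exists_Icc_forall_Ioo_lt_of_continuousOn hcont ha hb ht
  have hcd : c ≤ d := htcd.1.trans htcd.2
  have hlength : pathLength α c d ≤ ENNReal.ofReal (2 * (K ^ 2 * (1 + C) + C)) :=
    (hα.mono hac hdb).pathLength_le_of_hasDetourBound hA hK hC hF hcd hc hd
      fun s hs => (hout s hs).le
  have hdist : dist (α t) (α c) ≤ 2 * (K ^ 2 * (1 + C) + C) := by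
    rw [← edist_le_ofReal (by positivity)]
    exact (eVariationOn.edist_le α htcd (left_mem_Icc.2 hcd)).trans hlength
  calc infDist (α t) A ≤ infDist (α c) A + dist (α t) (α c) := infDist_le_infDist_add_dist
    _ ≤ R + 2 * (K ^ 2 * (1 + C) + C) := add_le_add hc hdist

end IsQuasiGeodesicOn

theorem stmt9_general.{u} (f : ℝ → ℝ) (hf : ∀ M, ∃ R > 0, M ≤ f R) :
    ∃ N : ℝ → ℝ → ℝ, (∀ K C : ℝ, 1 ≤ K → 0 ≤ C → 0 ≤ N K C) ∧
      ∀ (Z : Type u) [MetricSpace Z] (A : Set Z),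
        (∀ R > 0, HasDetourBound A R (f R)) → IsMorseSet N A := by
  choose R hR_pos hfR using fun K : ℝ => hf (2 * K ^ 2)
  refine ⟨fun K C => R K + 2 * (K ^ 2 * (1 + C) + C), fun K C _ hC => ?_, ?_⟩
  · have := hR_pos K
    positivity
  · intro Z _ A hA K C hK hC a b α _ hα ha hb t ht
    have infDist_le_of_mem {x : Z} (hx : x ∈ A) : infDist x A ≤ R K :=
      (infDist_zero_of_mem hx).trans_le (hR_pos K).le
    exact hα.infDist_le_of_hasDetourBound (hA (R K) (hR_pos K)) (zero_lt_one.trans_le hK) hC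
      (hfR K) (infDist_le_of_mem ha) (infDist_le_of_mem hb) ht

theorem stmt9.{u} (f : ℝ → ℝ) (hfpos : ∀ R : ℝ, 0 < R → 0 < f R)
    (hfdiv : Tendsto f atTop atTop) :
    ∃ N : ℝ → ℝ → ℝ, (∀ K C : ℝ, 1 ≤ K → 0 ≤ C → 0 ≤ N K C) ∧
      ∀ (Z : Type u) [MetricSpace Z] (γ : ℝ → Z) (I : Set ℝ),
        IsGeodesicOn γ I → DetourCondition f γ I → IsMorseGeodesic N γ I := by
  obtain ⟨N, hN, hmorse⟩ := stmt9_general f fun M =>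
    ((eventually_gt_atTop 0).and (hfdiv.eventually_ge_atTop M)).exists
  exact ⟨N, hN, fun Z _ γ I _ hdetour => hmorse Z (γ '' I) hdetour⟩
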